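/- Let B be a separable stable C*-algebra, P₀ ∈ M(B) a projection with P₀ ∼ 1 ∼ 1 − P₀. Then the map α_{P₀} : U(M(B)) → Proj_∞(C(B)) given by U ↦ π(U P₀ U*) is a surjective open continuous map with local cross-sections, and hence a Hurewicz fibration; its fiber over π(P₀) is U_{P₀}(M(B)) = { U ∈ U(M(B)) : U P₀ − P₀ U ∈ B }. -/

import Mathlib

open scoped MultiplierAlgebra

/-- The spectral projection `1_{≥0}(x)` of a self-adjoint element onto `[0, ∞)`,
obtained by applying the indicator function of `[0, ∞)` via the continuous
functional calculus. -/
noncomputable def posSpectralProj {C : Type*} [CStarAlgebra C] (x : C) : C :=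
  cfc (fun t : ℝ => if 0 ≤ t then (1 : ℝ) else 0) x

/-- `x ∈ 𝓜(ℂ, B)` belongs to (the canonical image of) the ideal `B` of its
multiplier algebra. -/
def inCanonicalIdeal {B : Type*} [NonUnitalCStarAlgebra B] (x : 𝓜(ℂ, B)) : Prop :=
  ∃ b : B, (b : 𝓜(ℂ, B)) = x

/-- Murray–von Neumann equivalence of projections. -/
def MvNEquiv {C : Type*} [Mul C] [Star C] (p q : C) : Prop :=
  ∃ v : C, star v * v = p ∧ v * star v = q

/-- `B` is a stable C*-algebra, encoded via the standard characterization (for σ-unital,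
in particular separable, `B`): the multiplier algebra `𝓜(ℂ, B)` contains a sequence of
isometries with pairwise orthogonal ranges whose range projections sum to `1` strictly. -/
def IsStable (B : Type*) [NonUnitalCStarAlgebra B] : Prop :=
  ∃ s : ℕ → 𝓜(ℂ, B),
    (∀ n, star (s n) * s n = 1) ∧
    (∀ m n, m ≠ n → star (s m) * s n = 0) ∧
    ∀ b : B, Filter.Tendsto
      (fun N : ℕ => (∑ n ∈ Finset.range N, s n * star (s n)) * (b : 𝓜(ℂ, B)))
      Filter.atTop (nhds (b : 𝓜(ℂ, B)))

/-- `f` has the homotopy lifting property with respect to all topological spaces,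
i.e. `f` is a Hurewicz fibration. -/
def IsHurewiczFibration {E B' : Type*} [TopologicalSpace E] [TopologicalSpace B']
    (f : E → B') : Prop :=
  ∀ (X : Type*) [TopologicalSpace X] (g : C(X, E)) (H : C(X × unitInterval, B')),
    (∀ x, H (x, 0) = f (g x)) →
    ∃ G : C(X × unitInterval, E), (∀ x, G (x, 0) = g x) ∧ ∀ z, f (G z) = H z

/-- The space `Proj_∞(Q) = { p projection in Q : p ∼ 1 ∼ 1 − p }`. -/
abbrev ProjInfty (Q : Type*) [CStarAlgebra Q] :=
  {p : Q // (IsSelfAdjoint p ∧ IsIdempotentElem p) ∧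
    MvNEquiv p (1 : Q) ∧ MvNEquiv (1 - p) (1 : Q)}


section Aux
open scoped Topology
open Filter

section StrictLimits
variable {B : Type*} [NonUnitalCStarAlgebra B]

theorem mult_ext {x y : 𝓜(ℂ, B)} (h : ∀ b, x.fst b = y.fst b) : x = y := by
  have h1 : (x - y).fst = 0 := by
    ext b
    simp [h b]
  have h2 : ‖x - y‖ = 0 := by rw [← DoubleCentralizer.norm_fst, h1, norm_zero]
  exact sub_eq_zero.1 (norm_eq_zero.1 h2)

theorem coe_mul_fst (x : 𝓜(ℂ, B)) (b : B) :
    x * (b : 𝓜(ℂ, B)) = ((x.fst b : B) : 𝓜(ℂ, B)) := by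
  apply mult_ext
  intro c
  have hc : ∀ c d : B, x.fst (c * d) = x.fst c * d := by
    intro c d
    have : ∀ e : B, e * (x.fst (c * d) - x.fst c * d) = 0 := by
      intro e
      rw [mul_sub, ← x.central, ← mul_assoc, ← mul_assoc, ← x.central, sub_self]
    have h2 := this (star (x.fst (c * d) - x.fst c * d))
    exact sub_eq_zero.1 (CStarRing.star_mul_self_eq_zero_iff _ |>.1 h2)
  simp [hc]

theorem coe_norm (b : B) : ‖(b : 𝓜(ℂ, B))‖ = ‖b‖ := by
  rw [← DoubleCentralizer.norm_fst]
  simp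

theorem tendsto_fst_of_tendsto {x : ℕ → 𝓜(ℂ, B)} {b c : B}
    (h : Tendsto (fun N => x N * (b : 𝓜(ℂ, B))) atTop (𝓝 (c : 𝓜(ℂ, B)))) :
    Tendsto (fun N => (x N).fst b) atTop (𝓝 c) := by
  rw [tendsto_iff_norm_sub_tendsto_zero] at h ⊢
  refine h.congr fun N => ?_
  rw [coe_mul_fst, ← coe_norm ((x N).fst b - c)]
  congr 1
  exact (map_sub (DoubleCentralizer.coeHom (𝕜 := ℂ) (A := B)) _ _).symm

theorem exists_strict_limit (X : ℕ → 𝓜(ℂ, B)) (f g : B → B)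
    (hf : ∀ b, Tendsto (fun N => (X N).fst b) atTop (𝓝 (f b)))
    (hg : ∀ b, Tendsto (fun N => (star (X N)).fst b) atTop (𝓝 (g b))) :
    ∃ Y : 𝓜(ℂ, B), (∀ b, Y.fst b = f b) ∧ ∀ b, (star Y).fst b = g b := by
  have hs : ∀ b, Tendsto (fun N => (X N).snd b) atTop (𝓝 (star (g (star b)))) := by
    intro b
    have := (hg (star b)).star
    simpa using this
  let L := continuousLinearMapOfTendsto (fun N => (X N).fst) (f := f) (tendsto_pi_nhds.2 hf)
  let R := continuousLinearMapOfTendsto (fun N => (X N).snd)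
    (f := fun b => star (g (star b))) (tendsto_pi_nhds.2 hs)
  refine ⟨⟨(L, R), ?_⟩, fun b => rfl, fun b => ?_⟩
  · intro x y
    have h1 : Tendsto (fun N => (X N).snd x * y) atTop (𝓝 (R x * y)) := (hs x).mul_const y
    have h2 : Tendsto (fun N => x * (X N).fst y) atTop (𝓝 (x * L y)) := (hf y).const_mul x
    refine tendsto_nhds_unique h1 (h2.congr fun N => ?_)
    exact ((X N).central x y).symm
  · rw [DoubleCentralizer.star_fst]
    change star (star (g (star (star b)))) = g b
    simp

theorem fst_mul (x y : 𝓜(ℂ, B)) (b : B) : (x * y).fst b = x.fst (y.fst b) := by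
  rw [DoubleCentralizer.mul_fst]; rfl

/-- norm estimate -/
theorem norm_fst_sq (x : 𝓜(ℂ, B)) (b : B) :
    ‖x.fst b‖ ^ 2 ≤ ‖b‖ * ‖(star x * x).fst b‖ := by
  rw [sq, ← CStarRing.norm_star_mul_self]
  have : star (x.fst b) * x.fst b = star b * (star x * x).fst b := by
    rw [fst_mul, ← (star x).central]
    simp
  rw [this]
  exact (norm_mul_le _ _).trans (by rw [norm_star])

/-- partial sums are strictly Cauchy -/
theorem partial_limit (x y : ℕ → 𝓜(ℂ, B)) (E : B → B)
    (hx : ∀ n, star (x n) * x n = 1) (hxo : ∀ m n, m ≠ n → star (x m) * x n = 0)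
    (hy : ∀ b, Tendsto (fun N => (∑ n ∈ Finset.range N, y n * star (y n)).fst b) atTop (𝓝 (E b))) :
    ∃ f : B → B, ∀ b, Tendsto (fun N => (∑ n ∈ Finset.range N, x n * star (y n)).fst b)
      atTop (𝓝 (f b)) := by
  have key : ∀ s : Finset ℕ, star (∑ n ∈ s, x n * star (y n)) * (∑ n ∈ s, x n * star (y n))
      = ∑ n ∈ s, y n * star (y n) := by
    intro s
    rw [star_sum, Finset.sum_mul]
    refine Finset.sum_congr rfl fun n hn => ?_
    rw [Finset.mul_sum, Finset.sum_eq_single n]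
    · rw [star_mul, star_star, mul_assoc, ← mul_assoc (star (x n)), hx, one_mul]
    · intro m _ hm
      rw [star_mul, star_star, mul_assoc, ← mul_assoc (star (x n)), hxo _ _ hm.symm, zero_mul,
        mul_zero]
    · exact fun h => absurd hn h
  have hC : ∀ b, CauchySeq (fun N => (∑ n ∈ Finset.range N, x n * star (y n)).fst b) := by
    intro b
    have hc := (hy b).cauchySeq
    rw [Metric.cauchySeq_iff'] at hc ⊢
    intro ε hε
    obtain ⟨N, hN⟩ := hc (ε ^ 2 / (‖b‖ + 1)) (by positivity)
    refine ⟨N, fun n hn => ?_⟩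
    have h1 := hN n hn
    rw [dist_eq_norm] at h1 ⊢
    have e : ∀ z : ℕ → 𝓜(ℂ, B), (∑ k ∈ Finset.range n, z k).fst b -
        (∑ k ∈ Finset.range N, z k).fst b = (∑ k ∈ Finset.Ico N n, z k).fst b := by
      intro z
      rw [Finset.sum_Ico_eq_sub _ hn, DoubleCentralizer.sub_fst]; rfl
    rw [e] at h1 ⊢
    have h2 := norm_fst_sq (∑ k ∈ Finset.Ico N n, x k * star (y k)) b
    rw [key] at h2
    have h3 : ‖b‖ * ‖(∑ n ∈ Finset.Ico N n, y n * star (y n)).fst b‖ < ε ^ 2 := by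
      rw [lt_div_iff₀ (by positivity)] at h1
      nlinarith [norm_nonneg b, norm_nonneg ((∑ n ∈ Finset.Ico N n, y n * star (y n)).fst b),
        sq_nonneg ε]
    exact lt_of_pow_lt_pow_left₀ 2 hε.le (h2.trans_lt h3)
  choose f hf using fun b => cauchySeq_tendsto_of_complete (hC b)
  exact ⟨f, hf⟩

theorem exists_transport (x y : ℕ → 𝓜(ℂ, B)) (E F : 𝓜(ℂ, B))
    (hx : ∀ n, star (x n) * x n = 1) (hxo : ∀ m n, m ≠ n → star (x m) * x n = 0)
    (hy : ∀ n, star (y n) * y n = 1) (hyo : ∀ m n, m ≠ n → star (y m) * y n = 0)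
    (hxE : ∀ b, Tendsto (fun N => (∑ n ∈ Finset.range N, x n * star (x n)).fst b) atTop
      (𝓝 (E.fst b)))
    (hyF : ∀ b, Tendsto (fun N => (∑ n ∈ Finset.range N, y n * star (y n)).fst b) atTop
      (𝓝 (F.fst b))) :
    ∃ X : 𝓜(ℂ, B), X * star X = E ∧ star X * X = F := by
  obtain ⟨f, hf⟩ := partial_limit x y _ hx hxo hyF
  obtain ⟨g, hg⟩ := partial_limit y x _ hy hyo hxE
  have hst : ∀ (x y : ℕ → 𝓜(ℂ, B)) N, star (∑ n ∈ Finset.range N, x n * star (y n)) =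
      ∑ n ∈ Finset.range N, y n * star (x n) := by
    intro x y N
    simp [star_sum]
  obtain ⟨X, hX, hX'⟩ := exists_strict_limit _ f g hf (fun b => by simpa only [hst] using hg b)
  have hXn : ∀ (x y : ℕ → 𝓜(ℂ, B)) (X : 𝓜(ℂ, B)) (f : B → B), (∀ b, X.fst b = f b) →
      (∀ n, star (y n) * y n = 1) → (∀ m n, m ≠ n → star (y m) * y n = 0) →
      (∀ b, Tendsto (fun N => (∑ n ∈ Finset.range N, x n * star (y n)).fst b) atTop (𝓝 (f b))) →
      ∀ n, X * y n = x n := by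
    intro x y X f hX hy hyo hf n
    apply mult_ext
    intro b
    rw [fst_mul, hX]
    refine tendsto_nhds_unique (hf _) (tendsto_const_nhds.congr' ?_)
    filter_upwards [eventually_gt_atTop n] with N hN
    rw [← fst_mul, Finset.sum_mul, Finset.sum_eq_single n]
    · rw [mul_assoc, hy, mul_one]
    · intro m _ hm
      rw [mul_assoc, hyo _ _ hm, mul_zero]
    · intro h; exact absurd (Finset.mem_range.2 hN) h
  have h1 := hXn x y X f hX hy hyo hf
  have h2 := hXn y x (star X) g hX' hx hxo hg
  have fin : ∀ (x y : ℕ → 𝓜(ℂ, B)) (X E : 𝓜(ℂ, B)) (g : B → B), (∀ n, X * y n = x n) →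
      (∀ b, (star X).fst b = g b) →
      (∀ b, Tendsto (fun N => (∑ n ∈ Finset.range N, y n * star (x n)).fst b) atTop (𝓝 (g b))) →
      (∀ b, Tendsto (fun N => (∑ n ∈ Finset.range N, x n * star (x n)).fst b) atTop
      (𝓝 (E.fst b))) → X * star X = E := by
    intro x y X E g h1 hX' hg hE
    apply mult_ext
    intro b
    rw [fst_mul, hX']
    have h3 := (X.fst.continuous.tendsto _).comp (hg b)
    refine tendsto_nhds_unique h3 ((hE b).congr fun N => ?_)
    simp only [Function.comp]
    rw [← fst_mul, Finset.mul_sum]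
    simp only [← mul_assoc, h1]
  refine ⟨X, fin x y X E g h1 hX' hg hxE, ?_⟩
  have := fin y x (star X) F f h2 (by simpa using hX) hf hyF
  simpa using this

end StrictLimits

section CStar
variable {A : Type*} [CStarAlgebra A]

theorem norm_le_one_of_isometry {s : A} (h : star s * s = 1) : ‖s‖ ≤ 1 := by
  rcases subsingleton_or_nontrivial A with hA | hA
  · rw [Subsingleton.elim s 0]; simp
  · have := CStarRing.norm_star_mul_self (x := s)
    rw [h, norm_one] at this
    nlinarith [norm_nonneg s]

theorem spectrum_pos_of_isUnit {a : A} (ha : IsUnit (star a * a)) :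
    ∀ t ∈ spectrum ℝ (star a * a), 0 < t := by
  let _ := CStarAlgebra.spectralOrder A
  have _ := CStarAlgebra.spectralOrderedRing A
  intro t ht
  have h0 : 0 ≤ t := spectrum_nonneg_of_nonneg (star_mul_self_nonneg a) ht
  refine lt_of_le_of_ne h0 ?_
  rintro rfl
  exact spectrum.zero_notMem ℝ ha ht

theorem spectrum_nonneg' (a : A) : ∀ t ∈ spectrum ℝ (star a * a), 0 ≤ t := by
  let _ := CStarAlgebra.spectralOrder A
  have _ := CStarAlgebra.spectralOrderedRing A
  intro t ht
  exact spectrum_nonneg_of_nonneg (star_mul_self_nonneg a) ht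

/-- inverse square root of `a* a` -/
noncomputable def isq (a : A) : A := cfc (fun t : ℝ => (Real.sqrt t)⁻¹) (star a * a)

theorem isq_sa (a : A) : IsSelfAdjoint (isq a) := by
  unfold isq; exact cfc_predicate _ _

theorem isq_cont {a : A} (ha : IsUnit (star a * a)) :
    ContinuousOn (fun t : ℝ => (Real.sqrt t)⁻¹) (spectrum ℝ (star a * a)) := by
  apply ContinuousOn.inv₀ (Real.continuous_sqrt.continuousOn)
  intro t ht
  exact (Real.sqrt_pos.2 (spectrum_pos_of_isUnit ha t ht)).ne'

theorem isq_mul {a : A} (ha : IsUnit (star a * a)) : isq a * (star a * a) * isq a = 1 := by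
  have hsa : IsSelfAdjoint (star a * a) := IsSelfAdjoint.star_mul_self a
  have hc := isq_cont ha
  have h1 : isq a * (star a * a) * isq a =
      cfc (fun t : ℝ => (Real.sqrt t)⁻¹ * t * (Real.sqrt t)⁻¹) (star a * a) := by
    have e1 := cfc_mul (fun t : ℝ => (Real.sqrt t)⁻¹ * t) (fun t : ℝ => (Real.sqrt t)⁻¹)
      (star a * a) (hc.mul continuousOn_id) hc
    have e2 := cfc_mul (fun t : ℝ => (Real.sqrt t)⁻¹) (fun t : ℝ => t)
      (star a * a) hc continuousOn_id
    rw [e1, e2, cfc_id' ℝ (star a * a)]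
    rfl
  rw [h1, ← cfc_one ℝ (star a * a)]
  apply cfc_congr
  intro t ht
  have := spectrum_pos_of_isUnit ha t ht
  have h2 := Real.sqrt_pos.2 this
  have h3 := Real.sq_sqrt this.le
  simp only [Pi.one_apply]
  field_simp
  exact h3.symm

theorem polar_unitary {a : A} (ha : IsUnit a) : a * isq a ∈ unitary A := by
  have h1 : star (a * isq a) * (a * isq a) = 1 := by
    rw [star_mul, (isq_sa a).star_eq, ← isq_mul (ha.star.mul ha)]
    noncomm_ring
  have hu : IsUnit (isq a) := by
    have h2 := isq_mul (ha.star.mul ha)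
    rw [isUnit_iff_exists_and_exists]
    exact ⟨⟨(star a * a) * isq a, by rw [← mul_assoc, h2]⟩, ⟨_, h2⟩⟩
  refine Unitary.mem_iff.2 ⟨h1, ?_⟩
  obtain ⟨b, hb⟩ := (ha.mul hu).exists_right_inv
  have : star (a * isq a) = b := by
    calc _ = star (a * isq a) * ((a * isq a) * b) := by rw [hb, mul_one]
      _ = b := by rw [← mul_assoc, h1, one_mul]
  rw [this, hb]

theorem isq_continuousOn : ContinuousOn (isq : A → A) {a | IsUnit a} := by
  unfold isq
  refine ContinuousOn.cfc_of_mem_nhdsSet (s := Set.Ioi (0:ℝ)) _ ?_ ?_ ?_ ?_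
  · apply isOpen_Ioi.mem_nhdsSet.2
    intro t ht
    simp only [Set.mem_iUnion] at ht
    obtain ⟨a, ha, ht⟩ := ht
    exact spectrum_pos_of_isUnit (IsUnit.mul (IsUnit.star ha) ha) t ht
  · exact (continuous_star.mul continuous_id).continuousOn
  · exact fun a _ => IsSelfAdjoint.star_mul_self a
  · exact ContinuousOn.inv₀ Real.continuous_sqrt.continuousOn
      fun t ht => (Real.sqrt_pos.2 ht).ne'

theorem isq_one : isq (1 : A) = 1 := by
  unfold isq
  rw [star_one, one_mul, cfc_apply_one]
  simp

theorem starhom_continuous {Q : Type*} [CStarAlgebra Q] (π : A →⋆ₐ[ℂ] Q) : Continuous π :=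
  AddMonoidHomClass.continuous_of_bound π 1 fun a => by
    rw [one_mul]; exact NonUnitalStarAlgHom.norm_apply_le π a

theorem map_isq {Q : Type*} [CStarAlgebra Q] (π : A →⋆ₐ[ℂ] Q) {a : A} (ha : IsUnit a) :
    π (isq a) = isq (π a) := by
  have hcont : Continuous π := starhom_continuous π
  have h1 : IsSelfAdjoint (star a * a) := IsSelfAdjoint.star_mul_self a
  unfold isq
  rw [StarAlgHomClass.map_cfc (S := ℂ) π _ _ (isq_cont (ha.star.mul ha)) hcont h1 (h1.map π)]
  rw [map_mul, map_star]

theorem isq_commute {a p : A} (h : Commute (star a * a) p) : Commute (isq a) p := by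
  unfold isq
  exact h.cfc_real _

end CStar

section Lift

/-- An element with `π V = v` isometry, orthogonal to an isometry `R`, can be corrected. -/
theorem correct_isometry {A Q : Type*} [CStarAlgebra A] [CStarAlgebra Q] (π : A →⋆ₐ[ℂ] Q)
    (V R : A) (hv : star (π V) * π V = 1) (hR : star R * R = 1) (hRV : star R * V = 0) :
    ∃ f g : A, star (V * f + R * g) * (V * f + R * g) = 1 ∧ π (V * f + R * g) = π V := by
  have hsa : IsSelfAdjoint (star V * V) := IsSelfAdjoint.star_mul_self V
  let F : ℝ → ℝ := fun t => (Real.sqrt (max t 1))⁻¹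
  let G : ℝ → ℝ := fun t => Real.sqrt (1 - min t 1)
  have hF : Continuous F := by
    apply Continuous.inv₀ (by fun_prop)
    intro t
    exact (Real.sqrt_pos.2 (lt_of_lt_of_le one_pos (le_max_right _ _))).ne'
  have hG : Continuous G := by fun_prop
  have hFsa : star (cfc F (star V * V)) = cfc F (star V * V) :=
    IsSelfAdjoint.star_eq (cfc_predicate _ _)
  have hGsa : star (cfc G (star V * V)) = cfc G (star V * V) :=
    IsSelfAdjoint.star_eq (cfc_predicate _ _)
  have hVR : star V * R = 0 := by
    have := congrArg star hRV
    simpa using this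
  refine ⟨cfc F (star V * V), cfc G (star V * V), ?_, ?_⟩
  · have h1 : star (V * cfc F (star V * V) + R * cfc G (star V * V)) *
        (V * cfc F (star V * V) + R * cfc G (star V * V)) =
        cfc F (star V * V) * (star V * V) * cfc F (star V * V) +
        cfc G (star V * V) * cfc G (star V * V) := by
      calc _ = cfc F (star V * V) * (star V * V) * cfc F (star V * V) +
          cfc F (star V * V) * (star V * R) * cfc G (star V * V) +
          cfc G (star V * V) * (star R * V) * cfc F (star V * V) +
          cfc G (star V * V) * (star R * R) * cfc G (star V * V) := by
            rw [star_add, star_mul, star_mul, hFsa, hGsa]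
            noncomm_ring
        _ = _ := by rw [hVR, hRV, hR]; simp
    have e1 := cfc_mul (fun t : ℝ => F t * t) F (star V * V)
      (hF.mul continuous_id).continuousOn hF.continuousOn
    have e2 := cfc_mul F (fun t : ℝ => t) (star V * V) hF.continuousOn continuousOn_id
    rw [cfc_id' ℝ (star V * V)] at e2
    have e3 := cfc_mul G G (star V * V) hG.continuousOn hG.continuousOn
    have e4 := cfc_add (a := star V * V) (fun t : ℝ => F t * t * F t) (fun t : ℝ => G t * G t)
      ((hF.mul continuous_id).mul hF).continuousOn (hG.mul hG).continuousOn
    rw [h1, ← e2, ← e1, ← e3, ← e4, ← cfc_one ℝ (star V * V)]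
    apply cfc_congr
    intro t ht
    have ht0 := spectrum_nonneg' V t ht
    have hp : 0 < max t 1 := lt_of_lt_of_le one_pos (le_max_right _ _)
    have hg : G t * G t = 1 - min t 1 :=
      Real.mul_self_sqrt (by linarith [min_le_right t 1])
    have hf : F t * F t = (max t 1)⁻¹ := by
      simp only [F]
      rw [← mul_inv, Real.mul_self_sqrt hp.le]
    have : F t * t * F t + G t * G t = 1 := by
      rw [show F t * t * F t = F t * F t * t by ring, hf, hg]
      rcases le_total t 1 with h | h
      · simp [max_eq_right h, min_eq_left h]
      · have : t ≠ 0 := by linarith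
        simp [max_eq_left h, min_eq_right h, this]
    simpa using this
  · have hm : ∀ H : ℝ → ℝ, Continuous H → π (cfc H (star V * V)) = algebraMap ℝ Q (H 1) := by
      intro H hH
      rw [StarAlgHomClass.map_cfc (S := ℂ) π _ _ hH.continuousOn (starhom_continuous π) hsa
        (hsa.map π), map_mul, map_star, hv, cfc_apply_one]
    rw [map_add, map_mul, map_mul, hm F hF, hm G hG]
    simp [F, G]

variable {B Q : Type*} [NonUnitalCStarAlgebra B] [CStarAlgebra Q]

theorem exists_absorb (s : ℕ → 𝓜(ℂ, B)) (hs : ∀ n, star (s n) * s n = 1)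
    (hso : ∀ m n, m ≠ n → star (s m) * s n = 0)
    (hsum : ∀ b : B, Tendsto (fun N : ℕ => (∑ n ∈ Finset.range N, s n * star (s n)).fst b)
      atTop (𝓝 b)) (F : 𝓜(ℂ, B)) (hFsa : IsSelfAdjoint F) (hF : IsIdempotentElem F) :
    ∃ Z : 𝓜(ℂ, B), Z * star Z = 1 ∧ star Z * Z = 1 - s 0 * F * star (s 0) := by
  have hF' : F * F = F := hF
  have hFs : star F = F := hFsa
  let x : ℕ → 𝓜(ℂ, B) := fun n => s n * (1 - F) + s (n + 1) * F
  have hxx : ∀ m n, star (x m) * x n = (1 - F) * (star (s m) * s n) * (1 - F) +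
      (1 - F) * (star (s m) * s (n+1)) * F + F * (star (s (m+1)) * s n) * (1 - F) +
      F * (star (s (m+1)) * s (n+1)) * F := by
    intro m n
    simp only [x, star_add, star_mul, star_sub, star_one, hFs]
    noncomm_ring
  have hx : ∀ n, star (x n) * x n = 1 := by
    intro n
    rw [hxx, hs, hs, hso _ _ (by omega), hso _ _ (by omega)]
    simp only [mul_sub, sub_mul, mul_zero, zero_mul, mul_one, one_mul, hF']
    abel
  have hxo : ∀ m n, m ≠ n → star (x m) * x n = 0 := by
    intro m n hmn
    have z : (1 - F) * F = 0 := by rw [sub_mul, hF', one_mul, sub_self]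
    have z' : F * (1 - F) = 0 := by rw [mul_sub, hF', mul_one, sub_self]
    rw [hxx, hso _ _ hmn, hso (m+1) (n+1) (by omega)]
    have h1 : (1 - F) * (star (s m) * s (n+1)) * F = 0 := by
      by_cases h : m = n + 1
      · rw [h, hs, mul_one, z]
      · rw [hso _ _ h, mul_zero, zero_mul]
    have h2 : F * (star (s (m+1)) * s n) * (1 - F) = 0 := by
      by_cases h : m + 1 = n
      · rw [h, hs, mul_one, z']
      · rw [hso _ _ h, mul_zero, zero_mul]
    rw [h1, h2]; simp
  have hsumx : ∀ N, ∑ n ∈ Finset.range N, x n * star (x n) =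
      ∑ n ∈ Finset.range N, s n * star (s n) - s 0 * F * star (s 0) + s N * F * star (s N) := by
    intro N
    induction N with
    | zero => simp
    | succ N ih =>
      rw [Finset.sum_range_succ, ih, Finset.sum_range_succ]
      have : x N * star (x N) = s N * star (s N) - s N * F * star (s N) +
          s (N+1) * F * star (s (N+1)) := by
        have e : x N * star (x N) = s N * ((1 - F) * (1 - F)) * star (s N) +
          s N * ((1 - F) * F) * star (s (N+1)) + s (N+1) * (F * (1 - F)) * star (s N) +
          s (N+1) * (F * F) * star (s (N+1)) := by
          simp only [x, star_add, star_mul, star_sub, star_one, hFs]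
          noncomm_ring
        rw [e]
        simp only [mul_sub, sub_mul, mul_one, one_mul, hF']
        simp
      rw [this]
      abel
  have hsz : ∀ b : B, Tendsto (fun N => (s N * F * star (s N)).fst b) atTop (𝓝 0) := by
    intro b
    have h1 : Tendsto (fun N => (s N * star (s N)).fst b) atTop (𝓝 0) := by
      have := ((hsum b).comp (tendsto_add_atTop_nat 1)).sub (hsum b)
      rw [sub_self] at this
      refine this.congr fun N => ?_
      simp only [Function.comp, Finset.sum_range_succ, DoubleCentralizer.add_fst]
      simp
    have h2 : Tendsto (fun N => ‖F‖ * ‖(s N * star (s N)).fst b‖) atTop (𝓝 0) := by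
      simpa using h1.norm.const_mul ‖F‖
    refine squeeze_zero_norm (fun N => ?_) h2
    have e : s N * F * star (s N) = (s N * F * star (s N)) * (s N * star (s N)) := by
      rw [mul_assoc _ (star (s N)), ← mul_assoc (star (s N)), hs, one_mul]
    rw [e, fst_mul]
    refine (ContinuousLinearMap.le_opNorm _ _).trans ?_
    gcongr
    rw [DoubleCentralizer.norm_fst]
    have := norm_le_one_of_isometry (hs N)
    calc ‖s N * F * star (s N)‖ ≤ ‖s N‖ * ‖F‖ * ‖star (s N)‖ :=
          (norm_mul_le _ _).trans (by gcongr; exact norm_mul_le _ _)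
      _ ≤ 1 * ‖F‖ * 1 := by rw [norm_star]; gcongr
      _ = ‖F‖ := by ring
  obtain ⟨X, h1, h2⟩ := exists_transport s x 1 (1 - s 0 * F * star (s 0)) hs hso hx hxo
    (by simpa using hsum) (by
      intro b
      simp only [hsumx]
      have := ((hsum b).sub_const ((s 0 * F * star (s 0)).fst b)).add (hsz b)
      rw [add_zero] at this
      simpa using this)
  exact ⟨X, h1, h2⟩

/-- surjectivity core: lifting Cuntz-type pairs of isometries. -/
theorem lift_pair (s : ℕ → 𝓜(ℂ, B)) (hs : ∀ n, star (s n) * s n = 1)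
    (hso : ∀ m n, m ≠ n → star (s m) * s n = 0)
    (hsum : ∀ b : B, Tendsto (fun N : ℕ => (∑ n ∈ Finset.range N, s n * star (s n)).fst b)
      atTop (𝓝 b))
    (π : 𝓜(ℂ, B) →⋆ₐ[ℂ] Q) (hπ : Function.Surjective π)
    (hker : ∀ m : 𝓜(ℂ, B), π m = 0 → ∃ b : B, (b : 𝓜(ℂ, B)) = m)
    (v w : Q) (hv : star v * v = 1) (hw : star w * w = 1) (hwv : star w * v = 0) :
    ∃ V W : 𝓜(ℂ, B), π V = v ∧ star V * V = 1 ∧ star W * W = 1 ∧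
      V * star V + W * star W = 1 := by
  obtain ⟨V₀, rfl⟩ := hπ v
  obtain ⟨W₀, rfl⟩ := hπ w
  obtain ⟨b, hb⟩ := hker (star W₀ * W₀ - 1) (by
    rw [map_sub, map_mul, map_star, hw, map_one, sub_self])
  have h1 : Tendsto (fun N => (s N * star (s N)).fst b) atTop (𝓝 0) := by
    have := ((hsum b).comp (tendsto_add_atTop_nat 1)).sub (hsum b)
    rw [sub_self] at this
    refine this.congr fun N => ?_
    simp only [Function.comp, Finset.sum_range_succ, DoubleCentralizer.add_fst]
    simp
  obtain ⟨k, hk⟩ := (h1.norm.eventually (gt_mem_nhds (by rw [norm_zero]; exact one_pos))).exists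
  have hinv : IsUnit (star (W₀ * s k) * (W₀ * s k)) := by
    have e : star (W₀ * s k) * (W₀ * s k) = 1 - (- (star (s k) * (b : 𝓜(ℂ, B)) * s k)) := by
      rw [hb, mul_sub, sub_mul, mul_one, hs, star_mul]
      noncomm_ring
    rw [e]
    apply isUnit_one_sub_of_norm_lt_one
    rw [norm_neg]
    have hk1 := norm_le_one_of_isometry (hs k)
    have e2 : star (s k) * (b : 𝓜(ℂ, B)) * s k =
        star (s k) * (((s k * star (s k)).fst b : B) : 𝓜(ℂ, B)) * s k := by
      rw [← coe_mul_fst, ← mul_assoc, ← mul_assoc, hs, one_mul]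
    rw [e2]
    calc _ ≤ ‖star (s k)‖ * ‖(((s k * star (s k)).fst b : B) : 𝓜(ℂ, B))‖ * ‖s k‖ :=
          (norm_mul_le _ _).trans (by gcongr; exact norm_mul_le _ _)
      _ ≤ 1 * ‖(((s k * star (s k)).fst b : B) : 𝓜(ℂ, B))‖ * 1 := by rw [norm_star]; gcongr
      _ < 1 := by rw [coe_norm]; simpa using hk
  obtain ⟨c, hc, hcsa⟩ : ∃ c : 𝓜(ℂ, B), c * (star (W₀ * s k) * (W₀ * s k)) * c = 1 ∧
      star c = c :=
    ⟨isq (W₀ * s k), isq_mul hinv, (isq_sa _).star_eq⟩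
  let R := W₀ * s k * c
  have hR : star R * R = 1 := by
    rw [← hc]
    simp only [R, star_mul, hcsa]
    noncomm_ring
  have hRv : star (π R) * π V₀ = 0 := by
    simp only [R, map_mul, star_mul]
    simp only [mul_assoc, hwv, mul_zero]
  let V₁ := (1 - R * star R) * V₀
  have hV₁ : π V₁ = π V₀ := by
    simp only [V₁, map_mul, map_sub, map_star, sub_mul, one_mul]
    rw [mul_assoc, hRv, mul_zero, sub_zero]
  have hRV₁ : star R * V₁ = 0 := by
    simp only [V₁]
    rw [← mul_assoc, mul_sub, ← mul_assoc, hR, mul_one, one_mul, sub_self, zero_mul]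
  obtain ⟨f, g, hfg, hπfg⟩ := correct_isometry π V₁ (R * s 1) (by rw [hV₁, hv])
    (by rw [star_mul, mul_assoc, ← mul_assoc (star R), hR, one_mul, hs])
    (by rw [star_mul, mul_assoc, hRV₁, mul_zero])
  set V := V₁ * f + R * s 1 * g with hV
  let R₂ := R * s 0
  have hR₂ : star R₂ * R₂ = 1 := by
    simp only [R₂]
    rw [star_mul, mul_assoc, ← mul_assoc (star R), hR, one_mul, hs]
  have hR₂V : star R₂ * V = 0 := by
    have : star R₂ * V = star (s 0) * (star R * V₁) * f + star (s 0) * (star R * R) * s 1 * g := by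
      simp only [R₂, hV, star_mul]
      noncomm_ring
    rw [this, hRV₁, hR, mul_one, hso 0 1 (by norm_num)]
    simp
  have hVR₂ : star V * R₂ = 0 := by
    have := congrArg star hR₂V
    simpa using this
  -- the complementary projection
  let F := 1 - V * star V - R₂ * star R₂
  have hFsa : star F = F := by simp [F]
  have hFR : F * R₂ = 0 := by
    simp only [F]
    rw [sub_mul, sub_mul, mul_assoc, hVR₂, mul_assoc, hR₂]
    simp
  have hFV : F * V = 0 := by
    simp only [F]
    rw [sub_mul, sub_mul, mul_assoc, hfg, mul_assoc, hR₂V]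
    simp
  have hFF : F * F = F := by
    conv_lhs => rw [show F * F = F * 1 - F * V * star V - F * R₂ * star R₂ by
      conv_lhs => rhs; rw [show F = 1 - V * star V - R₂ * star R₂ from rfl]
      noncomm_ring]
    rw [hFV, hFR]; simp
  obtain ⟨Z, hZ1, hZ2⟩ := exists_absorb s hs hso hsum F hFsa hFF
  have hZF : Z * s 0 * F = 0 := by
    have : star (Z * s 0 * F) * (Z * s 0 * F) = 0 := by
      have e : star (Z * s 0 * F) * (Z * s 0 * F) = F * (star (s 0) * (star Z * Z) * s 0) * F := by
        simp only [star_mul, hFsa]; noncomm_ring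
      have e' : star (s 0) * (1 - s 0 * F * star (s 0)) * s 0 =
        star (s 0) * s 0 - (star (s 0) * s 0) * F * (star (s 0) * s 0) := by noncomm_ring
      rw [e, hZ2, e', hs]
      simp [mul_sub, hFF]
    exact (CStarRing.star_mul_self_eq_zero_iff _).1 this
  have hZF' : F * star (s 0) * star Z = 0 := by
    have := congrArg star hZF
    simpa [hFsa, mul_assoc] using this
  have hRF : star R₂ * F = 0 := by
    have := congrArg star hFR
    simpa [hFsa] using this
  refine ⟨V, F * star (s 0) + R₂ * Z, hπfg.trans hV₁, hfg, ?_, ?_⟩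
  · have e : star (F * star (s 0) + R₂ * Z) * (F * star (s 0) + R₂ * Z) =
        s 0 * (F * F) * star (s 0) + s 0 * (F * R₂) * Z + star Z * (star R₂ * F) * star (s 0) +
        star Z * (star R₂ * R₂) * Z := by
      simp only [star_add, star_mul, star_star, hFsa]; noncomm_ring
    rw [e, hFF, hFR, hRF, hR₂, mul_one, hZ2]
    simp
  · have e : (F * star (s 0) + R₂ * Z) * star (F * star (s 0) + R₂ * Z) =
        F * (star (s 0) * s 0) * F + (F * star (s 0) * star Z) * star R₂ + R₂ * (Z * s 0 * F) +
        R₂ * (Z * star Z) * star R₂ := by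
      simp only [star_add, star_mul, star_star, hFsa]; noncomm_ring
    rw [e, hs, hZF, hZF', hZ1, mul_one, mul_one, hFF]
    simp only [F]
    simp

end Lift

section Slice

theorem bartle_graves {E F : Type*} [NormedAddCommGroup E] [NormedSpace ℝ E] [CompleteSpace E]
    [NormedAddCommGroup F] [NormedSpace ℝ F] [CompleteSpace F] (T : E →L[ℝ] F)
    (hT : Function.Surjective T) : ∃ σ : F → E, Continuous σ ∧ ∀ x, T (σ x) = x := by
  obtain ⟨C, hC0, hC⟩ := T.exists_preimage_norm_le hT
  have step : ∀ (n : ℕ) (S : {S : C(F, E) // ∀ x, ‖x - T (S x)‖ < (1/2) ^ n}),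
      ∃ S' : {S : C(F, E) // ∀ x, ‖x - T (S x)‖ < (1/2) ^ (n + 1)},
        ∀ x, ‖S'.1 x - S.1 x‖ ≤ C * (1/2) ^ n := by
    rintro n ⟨S, hS⟩
    obtain ⟨g, hg⟩ := exists_continuous_forall_mem_convex_of_local_const (X := F) (E := E)
      (t := fun x => Metric.closedBall 0 (C * (1/2) ^ n) ∩
        T ⁻¹' (Metric.ball (x - T (S x)) ((1/2) ^ (n + 1)))) (by
        intro x
        exact (convex_closedBall _ _).inter
          ((convex_ball _ _).linear_preimage T.toLinearMap)) (by
        intro x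
        obtain ⟨c, hc, hc'⟩ := hC (x - T (S x))
        refine ⟨c, ?_⟩
        have hcont : Continuous fun y => y - T (S y) := by fun_prop
        have := hcont.continuousAt (x := x) |>.eventually
          (Metric.ball_mem_nhds (x - T (S x)) (ε := (1/2) ^ (n + 1)) (by positivity))
        filter_upwards [this] with y hy
        refine ⟨?_, ?_⟩
        · rw [mem_closedBall_zero_iff]
          exact hc'.trans (by gcongr; exact (hS x).le)
        · rw [Set.mem_preimage, hc]
          exact Metric.mem_ball_comm.1 hy)
    refine ⟨⟨S + g, fun x => ?_⟩, fun x => ?_⟩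
    · have := (hg x).2
      rw [Set.mem_preimage, mem_ball_iff_norm'] at this
      have e : x - T ((S + g) x) = x - T (S x) - T (g x) := by simp [sub_sub]
      rw [e]; exact this
    · simpa using (hg x).1
  have base : ∃ S : C(F, E), ∀ x, ‖x - T (S x)‖ < (1/2) ^ 0 := by
    obtain ⟨g, hg⟩ := exists_continuous_forall_mem_convex_of_local_const (X := F) (E := E)
      (t := fun x => T ⁻¹' (Metric.ball x 1)) (by
        intro x
        exact (convex_ball _ _).linear_preimage T.toLinearMap) (by
        intro x
        obtain ⟨c, hc, hc'⟩ := hC x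
        refine ⟨c, ?_⟩
        filter_upwards [Metric.ball_mem_nhds x one_pos] with y hy
        rw [Set.mem_preimage, hc]
        exact Metric.mem_ball_comm.1 hy)
    refine ⟨g, fun x => ?_⟩
    have := hg x
    rw [Set.mem_preimage, mem_ball_iff_norm'] at this
    simpa using this
  obtain ⟨S₀, hS₀⟩ := base
  choose nxt hnxt using step
  let S : (n : ℕ) → {S : C(F, E) // ∀ x, ‖x - T (S x)‖ < (1/2) ^ n} :=
    fun n => Nat.rec ⟨S₀, hS₀⟩ (fun n s => nxt n s) n
  have hS : ∀ n x, dist ((S n).1 x) ((S (n + 1)).1 x) ≤ C * (1/2) ^ n := by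
    intro n x
    rw [dist_comm, dist_eq_norm]
    exact hnxt n (S n) x
  choose σ hσ using fun x => cauchySeq_tendsto_of_complete
    (cauchySeq_of_le_geometric (1/2) C (by norm_num) (fun n => hS n x))
  refine ⟨σ, ?_, fun x => ?_⟩
  · have hu : TendstoUniformly (fun n x => (S n).1 x) σ atTop := by
      rw [Metric.tendstoUniformly_iff]
      intro ε hε
      have h0 : Tendsto (fun n : ℕ => C * (1/2 : ℝ) ^ n / (1 - 1/2)) atTop (𝓝 0) := by
        have := (tendsto_pow_atTop_nhds_zero_of_lt_one (r := (1/2 : ℝ)) (by norm_num)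
          (by norm_num)).const_mul C |>.div_const (1 - 1/2)
        simpa using this
      filter_upwards [h0.eventually (gt_mem_nhds hε)] with n hn x
      rw [dist_comm]
      exact (dist_le_of_le_geometric_of_tendsto (1/2) C (by norm_num) (fun n => hS n x)
        (hσ x) n).trans_lt hn
    exact hu.continuous (Frequently.of_forall fun n => (S n).1.continuous)
  · have h1 : Tendsto (fun n => x - T ((S n).1 x)) atTop (𝓝 (x - T (σ x))) :=
      ((T.continuous.tendsto _).comp (hσ x)).const_sub x
    have h2 : Tendsto (fun n => x - T ((S n).1 x)) atTop (𝓝 0) :=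
      squeeze_zero_norm (fun n => ((S n).2 x).le)
        (tendsto_pow_atTop_nhds_zero_of_lt_one (by norm_num) (by norm_num))
    exact (sub_eq_zero.1 (tendsto_nhds_unique h1 h2)).symm

theorem exists_slice {A Q : Type*} [CStarAlgebra A] [CStarAlgebra Q] (π : A →⋆ₐ[ℂ] Q)
    (hπ : Function.Surjective π) :
    ∃ (τ : Q × Q → unitary A) (δ : ℝ), 0 < δ ∧
      ContinuousOn τ {z | (IsSelfAdjoint z.1 ∧ IsIdempotentElem z.1) ∧
        (IsSelfAdjoint z.2 ∧ IsIdempotentElem z.2) ∧ dist z.1 z.2 < δ} ∧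
      (∀ p q, (IsSelfAdjoint p ∧ IsIdempotentElem p) → (IsSelfAdjoint q ∧ IsIdempotentElem q) →
        dist p q < δ → π (τ (p, q)) * p * star (π (τ (p, q))) = q) ∧
      (∀ p, (IsSelfAdjoint p ∧ IsIdempotentElem p) → τ (p, p) = 1) := by
  obtain ⟨σ₀, hσ₀, hσπ₀⟩ := bartle_graves
    ((⟨π.toAlgHom.toLinearMap, starhom_continuous π⟩ : A →L[ℂ] Q).restrictScalars ℝ) hπ
  obtain ⟨σ, hσ, hσπ, hσz⟩ : ∃ σ : Q → A, Continuous σ ∧ (∀ x, π (σ x) = x) ∧ σ 0 = 0 := by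
    refine ⟨fun x => σ₀ x - σ₀ 0, by fun_prop, fun x => ?_, sub_self _⟩
    have h1 : π (σ₀ x) = x := hσπ₀ x
    have h2 : π (σ₀ 0) = 0 := hσπ₀ 0
    rw [map_sub, h1, h2, sub_zero]
  obtain ⟨ρ, hρ, hρσ⟩ : ∃ ρ > 0, ∀ x, ‖x‖ < ρ → ‖σ x‖ < 1 := by
    have := Metric.continuousAt_iff.1 (hσ.continuousAt (x := 0)) 1 one_pos
    simpa [hσz] using this
  let z : Q × Q → Q := fun w => w.2 * w.1 + (1 - w.2) * (1 - w.1)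
  let a : Q × Q → A := fun w => 1 + σ (z w - 1)
  have hz : Continuous z := by fun_prop
  have ha : Continuous a := by fun_prop
  have hπa : ∀ w, π (a w) = z w := by
    intro w
    simp [a, hσπ]
  have hnorm : ∀ p : Q, (IsSelfAdjoint p ∧ IsIdempotentElem p) → ‖p‖ ≤ 1 := by
    rintro p ⟨h1, h2⟩
    have := CStarRing.norm_star_mul_self (x := p)
    rw [h1.star_eq, h2.eq] at this
    nlinarith [norm_nonneg p]
  have hunit : ∀ p q, (IsSelfAdjoint p ∧ IsIdempotentElem p) →
      (IsSelfAdjoint q ∧ IsIdempotentElem q) → dist p q < ρ / 2 → IsUnit (a (p, q)) := by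
    intro p q hp hq hpq
    have e : z (p, q) - 1 = q * (p - q) + (q - p) * p := by
      simp only [z, mul_sub, sub_mul, mul_one, one_mul, hp.2.eq, hq.2.eq]
      abel
    have hlt : ‖z (p, q) - 1‖ < ρ := by
      rw [e]
      rw [dist_eq_norm] at hpq
      calc _ ≤ ‖q‖ * ‖p - q‖ + ‖q - p‖ * ‖p‖ :=
            (norm_add_le _ _).trans (add_le_add (norm_mul_le _ _) (norm_mul_le _ _))
        _ ≤ 1 * ‖p - q‖ + ‖q - p‖ * 1 := by
            gcongr
            · exact hnorm q hq
            · exact hnorm p hp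
        _ < ρ := by rw [norm_sub_rev q p]; linarith
    have : a (p, q) = 1 - (- σ (z (p, q) - 1)) := by simp [a]
    rw [this]
    apply isUnit_one_sub_of_norm_lt_one
    rw [norm_neg]
    exact hρσ _ hlt
  classical
  let τ : Q × Q → unitary A := fun w =>
    if h : IsUnit (a w) then ⟨a w * isq (a w), polar_unitary h⟩ else 1
  have hτ : ∀ w, IsUnit (a w) → (τ w : A) = a w * isq (a w) := by
    intro w hw
    simp only [τ, dif_pos hw]
  refine ⟨τ, ρ / 2, by positivity, ?_, ?_, ?_⟩
  · rw [Topology.IsInducing.subtypeVal.continuousOn_iff]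
    have : ContinuousOn (fun w => a w * isq (a w)) {z : Q × Q |
        (IsSelfAdjoint z.1 ∧ IsIdempotentElem z.1) ∧
        (IsSelfAdjoint z.2 ∧ IsIdempotentElem z.2) ∧ dist z.1 z.2 < ρ / 2} :=
      ha.continuousOn.mul (isq_continuousOn.comp ha.continuousOn
        fun w hw => hunit w.1 w.2 hw.1 hw.2.1 hw.2.2)
    exact this.congr fun w hw => hτ w (hunit w.1 w.2 hw.1 hw.2.1 hw.2.2)
  · intro p q hp hq hpq
    have hu := hunit p q hp hq hpq
    have hzu : IsUnit (z (p, q)) := by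
      rw [← hπa]; exact hu.map π
    have hzp : z (p, q) * p = q * z (p, q) := by
      simp only [z, mul_sub, sub_mul, mul_one, one_mul, mul_add, add_mul, mul_assoc, hp.2.eq]
      simp only [← mul_assoc, hq.2.eq]
      abel
    have hzp' : star (z (p, q)) * q = p * star (z (p, q)) := by
      have := congrArg star hzp
      rw [star_mul, star_mul, hp.1.star_eq, hq.1.star_eq] at this
      exact this.symm
    have hcomm : Commute (star (z (p, q)) * z (p, q)) p := by
      change _ * _ * _ = _ * (_ * _)
      rw [mul_assoc, hzp, ← mul_assoc, hzp', mul_assoc]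
    have hci := isq_commute hcomm
    rw [hτ _ hu, map_mul, map_isq π hu, hπa]
    have h2 := (Unitary.mem_iff.1 (polar_unitary hzu)).2
    calc _ = z (p, q) * (isq (z (p, q)) * p) * star (z (p, q) * isq (z (p, q))) := by
            rw [mul_assoc (z (p, q))]
      _ = (z (p, q) * p) * isq (z (p, q)) * star (z (p, q) * isq (z (p, q))) := by
            rw [hci.eq, mul_assoc (z (p, q)) p]
      _ = q * (z (p, q) * isq (z (p, q)) * star (z (p, q) * isq (z (p, q)))) := by
            rw [hzp]; simp only [mul_assoc]
      _ = q := by rw [h2, mul_one]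
  · intro p hp
    have e : a (p, p) = 1 := by
      have : z (p, p) = 1 := by
        simp only [z, mul_sub, sub_mul, mul_one, one_mul, hp.2.eq]
        abel
      simp [a, this, hσz]
    apply Subtype.ext
    rw [hτ _ (by rw [e]; exact isUnit_one), e, isq_one, mul_one]
    rfl

end Slice

section Fibration

open unitInterval in
theorem exists_transport_function {P G : Type*} [MetricSpace P] [Monoid G] [TopologicalSpace G]
    [ContinuousMul G] (act : G → P → P) (hact1 : ∀ p, act 1 p = p)
    (hact : ∀ g h p, act (g * h) p = act g (act h p))
    (τ : P × P → G) (δ : ℝ) (hδ : 0 < δ) (hτc : ContinuousOn τ {z | dist z.1 z.2 < δ})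
    (hτ : ∀ p q, dist p q < δ → act (τ (p, q)) p = q) (hτ1 : ∀ p, τ (p, p) = 1) :
    ∃ L : C(C(I, P) × I, G), (∀ γ, L (γ, 0) = 1) ∧ ∀ γ t, act (L (γ, t)) (γ 0) = γ t := by
  obtain ⟨ε, hε⟩ := exists_continuous_forall_mem_convex_of_local_const (X := C(I, P)) (E := ℝ)
    (t := fun γ => {e | 0 < e ∧ ∀ s t, dist s t ≤ e → dist (γ s) (γ t) < δ}) (by
      intro γ
      apply Set.OrdConnected.convex
      constructor
      rintro x hx y hy z ⟨hxz, hzy⟩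
      exact ⟨hx.1.trans_le hxz, fun s t hst => hy.2 s t (hst.trans hzy)⟩) (by
      intro γ
      have huc := CompactSpace.uniformContinuous_of_continuous γ.continuous
      obtain ⟨e, he, hγ⟩ := Metric.uniformContinuous_iff.1 huc (δ / 3) (by positivity)
      refine ⟨e / 2, ?_⟩
      filter_upwards [Metric.ball_mem_nhds γ (show 0 < δ / 3 by positivity)] with η hη
      refine ⟨by positivity, fun s t hst => ?_⟩
      have h1 := hγ (lt_of_le_of_lt hst (by linarith))
      have h2 := (ContinuousMap.dist_apply_le_dist (f := η) (g := γ) s).trans_lt hη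
      have h3 := (ContinuousMap.dist_apply_le_dist (f := η) (g := γ) t).trans_lt hη
      calc dist (η s) (η t) ≤ dist (η s) (γ s) + dist (γ s) (γ t) + dist (γ t) (η t) :=
            dist_triangle4 _ _ _ _
        _ < δ := by rw [dist_comm (γ t)]; linarith)
  have hε0 : ∀ γ, 0 < ε γ := fun γ => (hε γ).1
  let r : ℕ → C(I, P) × I → I := fun k z => ⟨min (k * ε z.1) z.2,
    le_min (mul_nonneg k.cast_nonneg (hε0 _).le) z.2.2.1, (min_le_right _ _).trans z.2.2.2⟩
  have hr : ∀ k, Continuous (r k) := by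
    intro k
    apply Continuous.subtype_mk
    fun_prop
  have hrd : ∀ (k : ℕ) (z : C(I, P) × I), dist (z.1 (r k z)) (z.1 (r (k + 1) z)) < δ := by
    intro k z
    apply (hε z.1).2
    rw [Subtype.dist_eq, Real.dist_eq]
    simp only [r]
    have h := hε0 z.1
    refine (abs_min_sub_min_le_max _ _ _ _).trans ?_
    push_cast
    rw [sub_self, abs_zero, max_eq_left (abs_nonneg _),
      show (k : ℝ) * ε z.1 - (k + 1) * ε z.1 = - ε z.1 by ring, abs_neg, abs_of_pos h]
  let F : ℕ → C(I, P) × I → G := fun k => Nat.rec (fun _ => 1)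
    (fun k f z => τ (z.1 (r k z), z.1 (r (k + 1) z)) * f z) k
  have hF0 : ∀ z, F 0 z = 1 := fun z => rfl
  have hFs : ∀ k z, F (k + 1) z = τ (z.1 (r k z), z.1 (r (k + 1) z)) * F k z := fun k z => rfl
  have hFc : ∀ k, Continuous (F k) := by
    intro k
    induction k with
    | zero => exact continuous_const
    | succ k ih =>
      have h1 : Continuous fun z : C(I, P) × I => (z.1 (r k z), z.1 (r (k + 1) z)) := by
        have := hr k
        have := hr (k + 1)
        fun_prop
      exact (hτc.comp_continuous h1 (fun z => hrd k z)).mul ih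
  have hr0 : ∀ z, r 0 z = 0 := by
    intro z
    apply Subtype.ext
    simp only [r, Nat.cast_zero, zero_mul]
    exact min_eq_left z.2.2.1
  have hFa : ∀ k z, act (F k z) (z.1 0) = z.1 (r k z) := by
    intro k z
    induction k with
    | zero => rw [hF0, hact1, hr0]
    | succ k ih => rw [hFs, hact, ih, hτ _ _ (hrd k z)]
  have hrt : ∀ (k : ℕ) (z : C(I, P) × I), 1 ≤ k * ε z.1 → r k z = z.2 := by
    intro k z h
    apply Subtype.ext
    exact min_eq_right (z.2.2.2.trans h)
  have hFst : ∀ (k l : ℕ) (z : C(I, P) × I), 1 ≤ k * ε z.1 → k ≤ l → F l z = F k z := by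
    intro k l z h hkl
    induction l, hkl using Nat.le_induction with
    | base => rfl
    | succ l hl ih =>
      have h' : 1 ≤ l * ε z.1 :=
        h.trans (mul_le_mul_of_nonneg_right (by exact_mod_cast hl) (hε0 _).le)
      have h'' : 1 ≤ ((l + 1 : ℕ) : ℝ) * ε z.1 :=
        h.trans (mul_le_mul_of_nonneg_right (by exact_mod_cast hl.trans (Nat.le_succ l))
          (hε0 _).le)
      rw [hFs, hrt _ _ h', hrt _ _ h'', hτ1, one_mul, ih]
  let N : C(I, P) → ℕ := fun γ => ⌈1 / ε γ⌉₊
  have hN : ∀ γ, 1 ≤ N γ * ε γ := by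
    intro γ
    have := Nat.le_ceil (1 / ε γ)
    rwa [div_le_iff₀ (hε0 γ)] at this
  refine ⟨⟨fun z => F (N z.1) z, ?_⟩, ?_, ?_⟩
  · rw [continuous_iff_continuousAt]
    intro z₀
    have hev : ∀ᶠ z in 𝓝 z₀, ε z₀.1 / 2 < ε z.1 := by
      have hc : Continuous fun z : C(I, P) × I => ε z.1 := by fun_prop
      exact hc.continuousAt.eventually (lt_mem_nhds (by linarith [hε0 z₀.1]))
    refine ((hFc ⌈1 / (ε z₀.1 / 2)⌉₊).continuousAt).congr ?_
    filter_upwards [hev] with z hz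
    apply hFst _ _ _ (hN z.1)
    apply Nat.ceil_le_ceil
    exact one_div_le_one_div_of_le (by linarith [hε0 z₀.1]) hz.le
  · intro γ
    change F (N γ) (γ, 0) = 1
    have : ∀ k, F k (γ, 0) = 1 := by
      intro k
      have hrz : ∀ k, r k (γ, 0) = 0 := by
        intro k
        apply Subtype.ext
        exact min_eq_right (mul_nonneg k.cast_nonneg (hε0 _).le)
      induction k with
      | zero => rfl
      | succ k ih => rw [hFs, hrz, hrz, hτ1, ih, one_mul]
    exact this _
  · intro γ t
    change act (F (N γ) (γ, t)) (γ 0) = γ t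
    have := hFa (N γ) (γ, t)
    rw [hrt (N γ) (γ, t) (hN γ)] at this
    exact this

theorem fibration_of_slice {P G : Type*} [MetricSpace P] [Monoid G] [TopologicalSpace G]
    [ContinuousMul G] (act : G → P → P) (hact1 : ∀ p, act 1 p = p)
    (hact : ∀ g h p, act (g * h) p = act g (act h p))
    (τ : P × P → G) (δ : ℝ) (hδ : 0 < δ) (hτc : ContinuousOn τ {z | dist z.1 z.2 < δ})
    (hτ : ∀ p q, dist p q < δ → act (τ (p, q)) p = q) (hτ1 : ∀ p, τ (p, p) = 1)
    (p₀ : P) (hsurj : Function.Surjective fun g => act g p₀) :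
    IsOpenMap (fun g => act g p₀) ∧
    (∀ p : P, ∃ V : Set P, IsOpen V ∧ p ∈ V ∧
        ∃ cs : C(V, G), ∀ v : V, act (cs v) p₀ = (v : P)) ∧
    IsHurewiczFibration (fun g => act g p₀) := by
  refine ⟨?_, ?_, ?_⟩
  · rw [isOpenMap_iff_nhds_le]
    intro g s hs
    rw [Filter.mem_map] at hs
    have hc : ContinuousAt (fun q => τ (act g p₀, q) * g) (act g p₀) := by
      have h1 : ContinuousAt τ (act g p₀, act g p₀) := by
        apply hτc.continuousAt
        apply (isOpen_lt (by fun_prop) continuous_const).mem_nhds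
        simpa using hδ
      have h2 : ContinuousAt (fun q => (act g p₀, q)) (act g p₀) := by fun_prop
      exact (ContinuousAt.comp (f := fun q => (act g p₀, q)) h1 h2).mul continuousAt_const
    have h3 : ((fun g => act g p₀) ⁻¹' s) ∈ 𝓝 (τ (act g p₀, act g p₀) * g) := by
      rw [hτ1, one_mul]; exact hs
    filter_upwards [hc h3, Metric.ball_mem_nhds (act g p₀) hδ] with q hq hqd
    have h4 : act (τ (act g p₀, q) * g) p₀ ∈ s := hq
    rwa [hact, hτ _ _ (by rw [dist_comm]; exact hqd)] at h4
  · intro p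
    obtain ⟨g, hg⟩ := hsurj p
    refine ⟨Metric.ball p δ, Metric.isOpen_ball, Metric.mem_ball_self hδ,
      ⟨fun v => τ (p, v) * g, ?_⟩, fun v => ?_⟩
    · refine Continuous.mul (hτc.comp_continuous (by fun_prop) fun v => ?_) continuous_const
      have := v.2
      rw [Metric.mem_ball, dist_comm] at this
      exact this
    · change act (τ (p, v) * g) p₀ = v
      have hg' : act g p₀ = p := hg
      have := v.2
      rw [Metric.mem_ball, dist_comm] at this
      rw [hact, hg', hτ _ _ this]
  · obtain ⟨L, hL0, hL⟩ := exists_transport_function act hact1 hact τ δ hδ hτc hτ hτ1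
    intro X _ g H hH
    refine ⟨⟨fun z => L (H.curry z.1, z.2) * g z.1, by fun_prop⟩, fun x => ?_, fun z => ?_⟩
    · simp [hL0]
    · change act (L (H.curry z.1, z.2) * g z.1) p₀ = H z
      have h0 : act (g z.1) p₀ = H.curry z.1 0 := (hH z.1).symm
      rw [hact, h0, hL]
      rfl

end Fibration

section Final

open Filter Topology

theorem mvn_conj {Q : Type*} [CStarAlgebra Q] {u p : Q} (hu : star u * u = 1)
    (h : MvNEquiv p (1 : Q)) : MvNEquiv (u * p * star u) (1 : Q) := by
  obtain ⟨v, h1, h2⟩ := h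
  refine ⟨v * star u, ?_, ?_⟩
  · rw [← h1, star_mul, star_star]; simp only [mul_assoc]
  · rw [star_mul, star_star, mul_assoc, ← mul_assoc (star u), hu, one_mul, h2]

/-- conjugation action on `ProjInfty` -/
noncomputable def conjProj {A Q : Type*} [CStarAlgebra A] [CStarAlgebra Q] (π : A →⋆ₐ[ℂ] Q)
    (U : unitary A) (p : ProjInfty Q) : ProjInfty Q :=
  ⟨π U * p * star (π U), by
    have h1 : star (π U) * π U = 1 := by rw [← map_star, ← map_mul]; simp
    have h2 : π U * star (π U) = 1 := by rw [← map_star, ← map_mul]; simp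
    obtain ⟨p, ⟨hsa, hid⟩, hp1, hp2⟩ := p
    refine ⟨⟨?_, ?_⟩, mvn_conj h1 hp1, ?_⟩
    · exact hsa.conjugate (π U)
    · change _ * _ = _
      calc _ = π U * p * (star (π U) * π U) * p * star (π U) := by noncomm_ring
        _ = π U * (p * p) * star (π U) := by rw [h1]; noncomm_ring
        _ = _ := by rw [hid.eq]
    · have := mvn_conj h1 hp2
      rwa [mul_sub, sub_mul, mul_one, h2] at this⟩

theorem mvn_map {A Q : Type*} [CStarAlgebra A] [CStarAlgebra Q] (π : A →⋆ₐ[ℂ] Q) {p q : A}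
    (h : MvNEquiv p q) : MvNEquiv (π p) (π q) := by
  obtain ⟨v, h1, h2⟩ := h
  exact ⟨π v, by rw [← map_star, ← map_mul, h1], by rw [← map_star, ← map_mul, h2]⟩

theorem star_mul_eq_zero_of_sum {A : Type*} [CStarAlgebra A] {S T : A}
    (hS : star S * S = 1) (hT : star T * T = 1) (h : S * star S + T * star T = 1) :
    star S * T = 0 := by
  have e : star S * (S * star S + T * star T) * T =
      (star S * S) * (star S * T) + (star S * T) * (star T * T) := by noncomm_ring
  rw [h, hS, hT, mul_one, one_mul, mul_one] at e
  exact left_eq_add.1 e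

end Final

end Aux

/-- Let `B` be a separable stable C*-algebra, `π : M(B) → C(B)` the corona
quotient map (encoded as a surjective `*`-homomorphism onto a unital C*-algebra `Q` with
kernel the canonical ideal `B`), and `P₀ ∈ M(B)` a projection with `P₀ ∼ 1 ∼ 1 − P₀`.  Then
the map `α_{P₀} : U(M(B)) → Proj_∞(C(B))`, `U ↦ π(U P₀ U*)`, is a continuous open
surjection with local cross-sections, hence a Hurewicz fibration, and its fiber over
`π(P₀)` is `U_{P₀}(M(B)) = { U ∈ U(M(B)) : U P₀ − P₀ U ∈ B }`. -/
theorem stmt15 {B Q : Type*} [NonUnitalCStarAlgebra B] [TopologicalSpace.SeparableSpace B]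
    [CStarAlgebra Q] (hstable : IsStable B)
    (π : 𝓜(ℂ, B) →⋆ₐ[ℂ] Q) (hπ : Function.Surjective π)
    (hker : ∀ m : 𝓜(ℂ, B), π m = 0 ↔ inCanonicalIdeal m)
    (P₀ : 𝓜(ℂ, B)) (hP₀sa : IsSelfAdjoint P₀) (hP₀idem : IsIdempotentElem P₀)
    (hP₀₁ : MvNEquiv P₀ (1 : 𝓜(ℂ, B))) (hP₀₂ : MvNEquiv (1 - P₀) (1 : 𝓜(ℂ, B))) :
    ∃ α : unitary 𝓜(ℂ, B) → ProjInfty Q,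
      (∀ U : unitary 𝓜(ℂ, B),
        (α U : Q) = π ((U : 𝓜(ℂ, B)) * P₀ * star (U : 𝓜(ℂ, B)))) ∧
      Continuous α ∧
      Function.Surjective α ∧
      IsOpenMap α ∧
      (∀ p : ProjInfty Q, ∃ V : Set (ProjInfty Q), IsOpen V ∧ p ∈ V ∧
        ∃ cs : C(V, unitary 𝓜(ℂ, B)), ∀ v : V, α (cs v) = (v : ProjInfty Q)) ∧
      IsHurewiczFibration α ∧
      (∀ U : unitary 𝓜(ℂ, B), (α U : Q) = π P₀ ↔
        inCanonicalIdeal ((U : 𝓜(ℂ, B)) * P₀ - P₀ * (U : 𝓜(ℂ, B)))) := by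
  have hπ1 : ∀ U : unitary 𝓜(ℂ, B), star (π U) * π U = 1 := by
    intro U; rw [← map_star, ← map_mul]; simp
  have hπ2 : ∀ U : unitary 𝓜(ℂ, B), π U * star (π U) = 1 := by
    intro U; rw [← map_star, ← map_mul]; simp
  let p₀ : ProjInfty Q := ⟨π P₀, ⟨hP₀sa.map π, hP₀idem.map π⟩,
    by simpa using mvn_map π hP₀₁, by simpa using mvn_map π hP₀₂⟩
  have hval : ∀ U : unitary 𝓜(ℂ, B), (conjProj π U p₀ : Q) =
      π ((U : 𝓜(ℂ, B)) * P₀ * star (U : 𝓜(ℂ, B))) := by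
    intro U
    rw [map_mul, map_mul, map_star]
    rfl
  have hsurj : Function.Surjective fun U => conjProj π U p₀ := by
    rintro ⟨p, ⟨hpsa, hpid⟩, ⟨v, hv1, hv2⟩, ⟨w, hw1, hw2⟩⟩
    obtain ⟨s, hs, hso, hsum⟩ := hstable
    obtain ⟨S, hS1, hS2⟩ := hP₀₁
    obtain ⟨T, hT1, hT2⟩ := hP₀₂
    have hwv : star (star w) * star v = 0 := by
      have := star_mul_eq_zero_of_sum (S := star w) (T := star v)
        (by rwa [star_star]) (by rwa [star_star]) (by
          rw [star_star, star_star, hv1, hw1]; abel)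
      exact this
    obtain ⟨V, W, hV, hVV, hWW, hVW⟩ := lift_pair s hs hso
      (fun b => tendsto_fst_of_tendsto (hsum b)) π hπ (fun m hm => (hker m).1 hm)
      (star v) (star w) (by rwa [star_star]) (by rwa [star_star]) hwv
    have hTS : T * star S = 0 := by
      have := star_mul_eq_zero_of_sum (S := star T) (T := star S)
        (by rwa [star_star]) (by rwa [star_star]) (by
          rw [star_star, star_star, hS1, hT1]; abel)
      simpa using this
    have hST : S * star T = 0 := by
      have := congrArg star hTS
      simpa using this
    have hVW0 : star V * W = 0 := star_mul_eq_zero_of_sum hVV hWW hVW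
    have hWV0 : star W * V = 0 := by
      have := congrArg star hVW0
      simpa using this
    have hU : V * S + W * T ∈ unitary 𝓜(ℂ, B) := by
      refine Unitary.mem_iff.2 ⟨?_, ?_⟩
      · have e : star (V * S + W * T) * (V * S + W * T) = star S * (star V * V) * S +
            star S * (star V * W) * T + star T * (star W * V) * S +
            star T * (star W * W) * T := by
          simp only [star_add, star_mul]; noncomm_ring
        rw [e, hVV, hWW, hVW0, hWV0]
        simp [hS1, hT1]
      · have e : (V * S + W * T) * star (V * S + W * T) = V * (S * star S) * star V +
            V * (S * star T) * star W + W * (T * star S) * star V +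
            W * (T * star T) * star W := by
          simp only [star_add, star_mul]; noncomm_ring
        rw [e, hS2, hT2, hST, hTS]
        simp [hVW]
    refine ⟨⟨V * S + W * T, hU⟩, Subtype.ext ?_⟩
    change (conjProj π ⟨V * S + W * T, hU⟩ p₀ : Q) = p
    rw [hval]
    have e : (V * S + W * T) * P₀ * star (V * S + W * T) = V * star V := by
      have e : (V * S + W * T) * (star S * S) * star (V * S + W * T) =
          (V * (S * star S) + W * (T * star S)) *
            ((S * star S) * star V + (S * star T) * star W) := by
        simp only [star_add, star_mul]; noncomm_ring
      rw [← hS1, e, hS2, hTS, hST]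
      simp
    change π ((V * S + W * T) * P₀ * star (V * S + W * T)) = p
    rw [e, map_mul, map_star, hV, star_star, hv1]
  obtain ⟨τ, δ, hδ, hτc, hτ, hτ1⟩ := exists_slice π hπ
  obtain ⟨hopen, hloc, hfib⟩ := fibration_of_slice (conjProj π)
    (by intro p; apply Subtype.ext; simp [conjProj])
    (by intro g h p; apply Subtype.ext; simp [conjProj, mul_assoc])
    (fun z => τ (z.1.1, z.2.1)) δ hδ
    (hτc.comp (by fun_prop) fun z hz => ⟨z.1.2.1, z.2.2.1, hz⟩)
    (fun p q hpq => Subtype.ext (hτ p.1 q.1 p.2.1 q.2.1 hpq))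
    (fun p => hτ1 p.1 p.2.1) p₀ hsurj
  refine ⟨fun U => conjProj π U p₀, hval, ?_, hsurj, hopen, hloc, hfib, ?_⟩
  · apply Continuous.subtype_mk
    have := starhom_continuous π
    fun_prop
  · intro U
    rw [← hker, map_sub, map_mul, map_mul, sub_eq_zero]
    change π U * π P₀ * star (π U) = π P₀ ↔ _
    constructor
    · intro h
      calc _ = π U * π P₀ * (star (π U) * π U) := by rw [hπ1, mul_one]
        _ = _ := by rw [← mul_assoc, h]
    · intro h
      rw [h, mul_assoc, hπ2, mul_one]
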